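/- (Curvature conjugation under deformation, Eq. GEF.7.) Let D be a connection on U, let h : U → V →ₗ[ℝ] V be a smooth map with each h x invertible, and let D' be the h-deformation of D. Then the curvatures ρ' of D' and ρ of D satisfy, for all vector fields a, b, c on U and every x ∈ U: ρ'(a,b,c) x = (h x)⁻¹ (ρ(a, b, h·c) x). -/

import Mathlib

open scoped RealInnerProductSpace

variable {V : Type*} [NormedAddCommGroup V] [InnerProductSpace ℝ V] [FiniteDimensional ℝ V]

/-- A vector field on `U` is a smooth map `U → V`. -/
def IsVectorField (U : Set V) (X : V → V) : Prop := ContDiffOn ℝ (⊤ : ℕ∞) X U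

/-- Directional derivative `(a·∂X)(x) = fderiv ℝ X x (a x)`. -/
noncomputable def dirD (a X : V → V) : V → V := fun x => fderiv ℝ X x (a x)

/-- Lie bracket `[a,b] = a·∂b − b·∂a`. -/
noncomputable def bracket (a b : V → V) : V → V := fun x => dirD a b x - dirD b a x

/-- Smoothness of a connection field `Γ`. -/
def IsConnection (U : Set V) (Γ : V → V →ₗ[ℝ] V →ₗ[ℝ] V) : Prop :=
  ∀ u v : V, ContDiffOn ℝ (⊤ : ℕ∞) (fun x => Γ x u v) U

/-- Covariant derivative associated to the connection field `Γ`. -/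
noncomputable def covD (Γ : V → V →ₗ[ℝ] V →ₗ[ℝ] V) (a X : V → V) : V → V :=
  fun x => fderiv ℝ X x (a x) + Γ x (a x) (X x)

/-- Curvature of an abstract covariant-derivative operator. -/
noncomputable def curvOf (Dop : (V → V) → (V → V) → (V → V)) (a b c : V → V) : V → V :=
  fun x => Dop a (Dop b c) x - Dop b (Dop a c) x - Dop (bracket a b) c x

/-- Curvature field `ρ(a,b,c) = D_a (D_b c) − D_b (D_a c) − D_{[a,b]} c`. -/
noncomputable def curv (Γ : V → V →ₗ[ℝ] V →ₗ[ℝ] V) : (V → V) → (V → V) → (V → V) → V → V :=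
  curvOf (covD Γ)

/-- A metric on `U`: smooth, pointwise self-adjoint and invertible. -/
def IsMetric (U : Set V) (g : V → V →ₗ[ℝ] V) : Prop :=
  (∀ u : V, ContDiffOn ℝ (⊤ : ℕ∞) (fun x => g x u) U) ∧
  ∀ x ∈ U, (∀ u v : V, ⟪g x u, v⟫ = ⟪u, g x v⟫) ∧ Function.Bijective (g x)

/-- Compatibility of an abstract covariant-derivative operator with the metric `g`:
`a·∂(X ·_g Y) = (D_a X) ·_g Y + X ·_g (D_a Y)` on `U`. -/
def CompatibleD (U : Set V) (Dop : (V → V) → (V → V) → (V → V)) (g : V → V →ₗ[ℝ] V) : Prop :=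
  ∀ a X Y : V → V, IsVectorField U a → IsVectorField U X → IsVectorField U Y →
    ∀ x ∈ U, fderiv ℝ (fun y => ⟪g y (X y), Y y⟫) x (a x) =
      ⟪g x (Dop a X x), Y x⟫ + ⟪g x (X x), Dop a Y x⟫

/-- Compatibility of the connection `Γ` with the metric `g`. -/
def Compatible (U : Set V) (Γ : V → V →ₗ[ℝ] V →ₗ[ℝ] V) (g : V → V →ₗ[ℝ] V) : Prop :=
  CompatibleD U (covD Γ) g

/-- The `h`-deformation `D'_a X = h⁻¹·(D_a (h·X))` of the covariant derivative of `Γ`,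
written with an explicit pointwise inverse `hinv` of `h`. -/
noncomputable def deform (Γ : V → V →ₗ[ℝ] V →ₗ[ℝ] V) (h hinv : V → V →ₗ[ℝ] V) :
    (V → V) → (V → V) → V → V :=
  fun a X x => hinv x (covD Γ a (fun y => h y (X y)) x)

open scoped Topology

section LocalOperator

variable {R E : Type*} [Semiring R] [AddCommMonoid E] [Module R E]

/-- Locality of an abstract covariant-derivative operator: at each point, `D a X` depends only on
the germ of `X`. It is what allows `h` and `h⁻¹` to be cancelled under a derivative when they are
inverse to each other only near the point. -/
def IsLocalOperator [TopologicalSpace E] (D : (E → E) → (E → E) → E → E) : Prop :=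
  ∀ (a : E → E) ⦃X Y : E → E⦄ ⦃x : E⦄, X =ᶠ[𝓝 x] Y → D a X x = D a Y x

/-- The deformation `D'_a X = h⁻¹·(D_a (h·X))` of an abstract covariant-derivative operator `D`,
with `hinv` in the role of `h⁻¹`; it extends `deform`, which is the case `D = covD Γ`. -/
def deformOf (D : (E → E) → (E → E) → E → E) (h hinv : E → E →ₗ[R] E) :
    (E → E) → (E → E) → E → E :=
  fun a X x => hinv x (D a (fun y => h y (X y)) x)

theorem IsLocalOperator.deformOf_deformOf [TopologicalSpace E] {D : (E → E) → (E → E) → E → E}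
    (hD : IsLocalOperator D) {h hinv : E → E →ₗ[R] E} {x : E}
    (hright : ∀ᶠ y in 𝓝 x, ∀ v, h y (hinv y v) = v) (a b c : E → E) :
    deformOf D h hinv a (deformOf D h hinv b c) x =
      hinv x (D a (D b fun y => h y (c y)) x) := by
  have cancel : (fun y => h y (deformOf D h hinv b c y)) =ᶠ[𝓝 x] D b fun y => h y (c y) :=
    hright.mono fun y hy => hy _
  exact congrArg (hinv x) (hD a cancel)

end LocalOperator

section Curvature

variable {E : Type*} [NormedAddCommGroup E] [InnerProductSpace ℝ E]

theorem isLocalOperator_covD (Γ : E → E →ₗ[ℝ] E →ₗ[ℝ] E) : IsLocalOperator (covD Γ) := by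
  intro a X Y x hXY
  simp only [covD, hXY.fderiv_eq, hXY.eq_of_nhds]

theorem deformed_curvature_conjugation_general {D : (E → E) → (E → E) → E → E}
    (hD : IsLocalOperator D) {h hinv : E → E →ₗ[ℝ] E} {x : E}
    (hright : ∀ᶠ y in 𝓝 x, ∀ v, h y (hinv y v) = v) (a b c : E → E) :
    curvOf (deformOf D h hinv) a b c x = hinv x (curvOf D a b (fun y => h y (c y)) x) := by
  rw [curvOf, hD.deformOf_deformOf hright, hD.deformOf_deformOf hright, deformOf, curvOf,
    map_sub, map_sub]

end Curvature

/-- Eq. (GEF.7): the curvature of the `h`-deformation is the conjugate of the curvature: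
`ρ'(a,b,c) = h⁻¹ (ρ(a,b,h·c))`. -/
theorem deformed_curvature_conjugation
    (U : Set V) (hU : IsOpen U)
    (Γ : V → V →ₗ[ℝ] V →ₗ[ℝ] V) (hΓ : IsConnection U Γ)
    (h hinv : V → V →ₗ[ℝ] V)
    (hsmooth : ∀ u : V, ContDiffOn ℝ (⊤ : ℕ∞) (fun x => h x u) U)
    (hbij : ∀ x ∈ U, Function.Bijective (h x))
    (hleft : ∀ x ∈ U, ∀ v : V, hinv x (h x v) = v)
    (hright : ∀ x ∈ U, ∀ v : V, h x (hinv x v) = v)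
    (a b c : V → V) (ha : IsVectorField U a) (hb : IsVectorField U b)
    (hc : IsVectorField U c)
    (x : V) (hx : x ∈ U) :
    curvOf (deform Γ h hinv) a b c x = hinv x (curv Γ a b (fun y => h y (c y)) x) :=
  deformed_curvature_conjugation_general (isLocalOperator_covD Γ)
    (Filter.eventually_of_mem (hU.mem_nhds hx) hright) a b c
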